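/- arXiv:1506.02608 — 2 statements merged into one kernel-verified Lean document; each statement's English description precedes it below -/
import Mathlib

section
/- For every integer ν ≥ 0 there exist smooth functions v_J, v_Y : (0,∞) → ℂ such that J_ν(ξ) = 2·Re( e(ξ/(2π))·v_J(ξ/π) ) and Y_ν(ξ) = 2·Re( e(ξ/(2π))·v_Y(ξ/π) ) for all ξ > 0, and such that for every integer μ ≥ 0 there is a constant C_{μ,ν} with |v_J^{(μ)}(ξ)| ≤ C_{μ,ν}·ξ^{−μ−1/2} and |v_Y^{(μ)}(ξ)| ≤ C_{μ,ν}·ξ^{−μ−1/2} for all ξ ≥ 1. -/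
noncomputable section

open MeasureTheory

/-- `e q = exp(2πiq)`. -/
def e (q : ℝ) : ℂ := Complex.exp (2 * Real.pi * Complex.I * q)

/-- The Bessel function of the first kind of nonnegative integer order,
`J_ν(ξ) = (1/π) ∫_0^π cos(νθ - ξ sin θ) dθ`. -/
def besselJ (ν : ℕ) (ξ : ℝ) : ℝ :=
  (1 / Real.pi) * ∫ θ in (0 : ℝ)..Real.pi, Real.cos (ν * θ - ξ * Real.sin θ)

/-- The Bessel function of the second kind of nonnegative integer order,
`Y_ν(ξ) = (1/π) ∫_0^π sin(ξ sin θ - νθ) dθ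
          - (1/π) ∫_0^∞ (e^{νt} + (-1)^ν e^{-νt}) e^{-ξ sinh t} dt`. -/
def besselY (ν : ℕ) (ξ : ℝ) : ℝ :=
  (1 / Real.pi) * (∫ θ in (0 : ℝ)..Real.pi, Real.sin (ξ * Real.sin θ - ν * θ)) -
    (1 / Real.pi) * ∫ t in Set.Ioi (0 : ℝ),
      (Real.exp (ν * t) + (-1 : ℝ) ^ ν * Real.exp (-(ν * t))) * Real.exp (-(ξ * Real.sinh t))

/-! Since `J_ν` and `Y_ν` are the real and imaginary parts of the Hankel function `J_ν + iY_ν`, one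
symbol `v_J` with `J_ν(ξ) + iY_ν(ξ) = 2 e(ξ/2π) v_J(ξ/π)` suffices, with `v_Y = -i v_J`. The
integral representations combine into a contour integral, from `i∞` through `0` to `π/2`, of
`exp(iξ sin z)` times an amplitude independent of `ξ`. It is deformed to the path of steepest
descent from `i∞` to the saddle point `π/2`, where `sin z = 1 + i sinh² y / cosh y` with `y = Im z`,
so the integral is `exp(iξ)` times a Laplace transform whose phase is at least `y² / 2`. Every
derivative in `ξ` brings down one factor of the phase, which costs `1/ξ` and half of the
exponential, and the remaining Gaussian integral is `O(ξ^{-1/2})`. -/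

open Set Filter Topology
open Complex (I)
open scoped Real

section LaplaceTransform

variable {α E : Type*} [MeasurableSpace α] [NormedAddCommGroup E] [NormedSpace ℝ E]
  {μ : Measure α} {p : α → ℝ} {g : α → E} {x : ℝ}

/-- The Laplace-type integral `x ↦ ∫ exp(-x p(y)) g(y) dμ(y)` with phase `p` and amplitude `g`.
It is meant for phases that are nonnegative almost everywhere and for `x > 0`. -/
def laplaceTransform (μ : Measure α) (p : α → ℝ) (g : α → E) (x : ℝ) : E :=
  ∫ y, Real.exp (-(x * p y)) • g y ∂μ

lemma laplaceTransform_const_mul_phase {r : ℝ} (hr : r ≠ 0) :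
    laplaceTransform μ (fun y ↦ r * p y) g (x / r) = laplaceTransform μ p g x := by
  simp only [laplaceTransform, ← mul_assoc, div_mul_cancel₀ x hr]

lemma pow_mul_exp_neg_mul_le {t : ℝ} (hx : 0 < x) (ht : 0 ≤ t) (n : ℕ) :
    t ^ n * Real.exp (-(x * t)) ≤ n.factorial * (2 / x) ^ n * Real.exp (-(x / 2 * t)) := by
  have hpow : (x / 2 * t) ^ n ≤ Real.exp (x / 2 * t) * n.factorial :=
    (div_le_iff₀ (by positivity)).mp (Real.pow_div_factorial_le_exp _ (by positivity) n)
  calc t ^ n * Real.exp (-(x * t))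
      = (2 / x) ^ n * (x / 2 * t) ^ n * Real.exp (-(x * t)) := by
        rw [← mul_pow]
        field_simp
    _ ≤ (2 / x) ^ n * (Real.exp (x / 2 * t) * n.factorial) * Real.exp (-(x * t)) := by gcongr
    _ = n.factorial * (2 / x) ^ n * (Real.exp (x / 2 * t) * Real.exp (-(x * t))) := by ring
    _ = n.factorial * (2 / x) ^ n * Real.exp (-(x / 2 * t)) := by
        rw [← Real.exp_add]
        ring_nf

lemma norm_exp_neg_mul_smul_pow_smul_le {t : ℝ} (hx : 0 < x) (ht : 0 ≤ t) (n : ℕ) (v : E) :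
    ‖Real.exp (-(x * t)) • (-t) ^ n • v‖ ≤
      n.factorial * (2 / x) ^ n * (Real.exp (-(x / 2 * t)) * ‖v‖) := by
  rw [norm_smul, norm_smul, Real.norm_eq_abs, Real.abs_exp, norm_pow, norm_neg,
    Real.norm_of_nonneg ht, ← mul_assoc, ← mul_assoc, mul_comm (Real.exp _)]
  exact mul_le_mul_of_nonneg_right (pow_mul_exp_neg_mul_le hx ht n) (norm_nonneg v)

lemma integrable_exp_neg_mul_smul_pow_smul (hpm : AEStronglyMeasurable p μ)
    (hp : ∀ᵐ y ∂μ, 0 ≤ p y)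
    (hg : ∀ x, 0 < x → Integrable (fun y ↦ Real.exp (-(x * p y)) • g y) μ) (n : ℕ) (hx : 0 < x) :
    Integrable (fun y ↦ Real.exp (-(x * p y)) • (-p y) ^ n • g y) μ := by
  refine (((hg (x / 2) (by positivity)).norm).const_mul
    (n.factorial * (2 / x) ^ n)).mono' ?_ ?_
  · simp only [smul_comm _ ((-p _) ^ n)]
    exact (hpm.neg.pow n).smul (hg x hx).aestronglyMeasurable
  · filter_upwards [hp] with y hy
    simpa only [norm_smul, Real.norm_eq_abs, Real.abs_exp] using
      norm_exp_neg_mul_smul_pow_smul_le hx hy n (g y)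

lemma hasDerivAt_laplaceTransform (hpm : AEStronglyMeasurable p μ) (hp : ∀ᵐ y ∂μ, 0 ≤ p y)
    (hg : ∀ x, 0 < x → Integrable (fun y ↦ Real.exp (-(x * p y)) • g y) μ) (hx : 0 < x) :
    HasDerivAt (laplaceTransform μ p g) (laplaceTransform μ p (fun y ↦ -p y • g y) x) x := by
  have hg' : ∀ x, 0 < x → Integrable (fun y ↦ Real.exp (-(x * p y)) • -p y • g y) μ :=
    fun x hx ↦ by simpa only [pow_one] using integrable_exp_neg_mul_smul_pow_smul hpm hp hg 1 hx
  refine (hasDerivAt_integral_of_dominated_loc_of_deriv_le (s := Ioi (x / 2))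
    (F := fun x y ↦ Real.exp (-(x * p y)) • g y)
    (F' := fun x y ↦ Real.exp (-(x * p y)) • -p y • g y)
    (Ioi_mem_nhds (half_lt_self hx)) ?_ (hg x hx) (hg' x hx).aestronglyMeasurable ?_
    (hg' (x / 2) (by positivity)).norm ?_).2
  · filter_upwards [Ioi_mem_nhds hx] with z hz using (hg z hz).aestronglyMeasurable
  · filter_upwards [hp] with y hy z hz
    rw [norm_smul, norm_smul (Real.exp _), Real.norm_eq_abs, Real.norm_eq_abs, Real.abs_exp,
      Real.abs_exp]
    have hxz : x / 2 ≤ z := (mem_Ioi.mp hz).le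
    gcongr
  · refine ae_of_all _ fun y z _ ↦ ?_
    rw [smul_smul]
    refine HasDerivAt.smul_const ?_ (g y)
    simpa using ((hasDerivAt_mul_const (p y)).neg.exp : HasDerivAt _ _ z)

lemma iteratedDerivWithin_laplaceTransform (hpm : AEStronglyMeasurable p μ)
    (hp : ∀ᵐ y ∂μ, 0 ≤ p y)
    (hg : ∀ x, 0 < x → Integrable (fun y ↦ Real.exp (-(x * p y)) • g y) μ) (n : ℕ) :
    EqOn (iteratedDerivWithin n (laplaceTransform μ p g) (Ioi 0))
      (laplaceTransform μ p fun y ↦ (-p y) ^ n • g y) (Ioi 0) := by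
  induction n with
  | zero => simp [EqOn]
  | succ n ih =>
    intro x hx
    have hderiv := hasDerivAt_laplaceTransform hpm hp
      (fun x ↦ integrable_exp_neg_mul_smul_pow_smul hpm hp hg n) hx
    rw [iteratedDerivWithin_succ, derivWithin_congr ih (ih hx),
      hderiv.hasDerivWithinAt.derivWithin (isOpen_Ioi.uniqueDiffWithinAt hx)]
    simp only [smul_smul, pow_succ']

theorem contDiffOn_laplaceTransform (hpm : AEStronglyMeasurable p μ) (hp : ∀ᵐ y ∂μ, 0 ≤ p y)
    (hg : ∀ x, 0 < x → Integrable (fun y ↦ Real.exp (-(x * p y)) • g y) μ) :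
    ContDiffOn ℝ (⊤ : ℕ∞) (laplaceTransform μ p g) (Ioi 0) := by
  refine contDiffOn_of_differentiableOn_deriv fun n _ ↦
    DifferentiableOn.congr (fun x hx ↦ ?_) (iteratedDerivWithin_laplaceTransform hpm hp hg n)
  exact (hasDerivAt_laplaceTransform hpm hp
    (fun x ↦ integrable_exp_neg_mul_smul_pow_smul hpm hp hg n)
    hx).differentiableAt.differentiableWithinAt

theorem norm_iteratedDerivWithin_laplaceTransform_le (hpm : AEStronglyMeasurable p μ)
    (hp : ∀ᵐ y ∂μ, 0 ≤ p y)
    (hg : ∀ x, 0 < x → Integrable (fun y ↦ Real.exp (-(x * p y)) • g y) μ) (n : ℕ) (hx : 0 < x) :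
    ‖iteratedDerivWithin n (laplaceTransform μ p g) (Ioi 0) x‖ ≤
      n.factorial * (2 / x) ^ n * ∫ y, Real.exp (-(x / 2 * p y)) * ‖g y‖ ∂μ := by
  rw [iteratedDerivWithin_laplaceTransform hpm hp hg n hx, ← integral_const_mul]
  refine norm_integral_le_of_norm_le ?_ ?_
  · simpa only [norm_smul, Real.norm_eq_abs, Real.abs_exp] using
      ((hg (x / 2) (by positivity)).norm).const_mul (n.factorial * (2 / x) ^ n)
  · filter_upwards [hp] with y hy using norm_exp_neg_mul_smul_pow_smul_le hx hy n (g y)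

end LaplaceTransform

section GaussianDecay

variable {E : Type*} [NormedAddCommGroup E] {p : ℝ → ℝ} {g : ℝ → E} {a c K x : ℝ}

lemma exp_neg_mul_mul_le_gaussian {y P r : ℝ} (hc : 0 < c) (hx : 0 < x) (hP : c * y ^ 2 ≤ P)
    (hr0 : 0 ≤ r) (hr : r ≤ K * Real.exp (a * y)) :
    Real.exp (-(x * P)) * r ≤
      K * Real.exp (a ^ 2 / (2 * c * x)) * Real.exp (-(c * x / 2) * y ^ 2) := by
  have hK : 0 ≤ K := nonneg_of_mul_nonneg_left (hr0.trans hr) (Real.exp_pos _)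
  -- AM-GM: `a y ≤ a² / (2cx) + (cx / 2) y²`
  have hsq : a ^ 2 / (2 * c * x) - a * y + c * x / 2 * y ^ 2 =
      (a - c * x * y) ^ 2 / (2 * c * x) := by
    field_simp
    ring
  have hsq0 : 0 ≤ (a - c * x * y) ^ 2 / (2 * c * x) := by positivity
  have hxP : x * (c * y ^ 2) ≤ x * P := by gcongr
  calc Real.exp (-(x * P)) * r
      ≤ Real.exp (-(x * P)) * (K * Real.exp (a * y)) := by gcongr
    _ = K * Real.exp (-(x * P) + a * y) := by rw [Real.exp_add]; ring
    _ ≤ K * Real.exp (a ^ 2 / (2 * c * x) + -(c * x / 2) * y ^ 2) := by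
        refine mul_le_mul_of_nonneg_left (Real.exp_le_exp.mpr ?_) hK
        linarith
    _ = _ := by rw [Real.exp_add]; ring

lemma ae_nonneg_of_quadratic_le (hc : 0 < c) (hp : ∀ y, 0 < y → c * y ^ 2 ≤ p y) :
    ∀ᵐ y ∂volume.restrict (Ioi 0), 0 ≤ p y := by
  filter_upwards [ae_restrict_mem measurableSet_Ioi] with y hy
  exact le_trans (by positivity) (hp y hy)

lemma ae_exp_neg_mul_norm_le_gaussian (hc : 0 < c) (hp : ∀ y, 0 < y → c * y ^ 2 ≤ p y)
    (hg : ∀ y, 0 < y → ‖g y‖ ≤ K * Real.exp (a * y)) (hx : 0 < x) :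
    ∀ᵐ y ∂volume.restrict (Ioi 0), Real.exp (-(x * p y)) * ‖g y‖ ≤
      K * Real.exp (a ^ 2 / (2 * c * x)) * Real.exp (-(c * x / 2) * y ^ 2) := by
  filter_upwards [ae_restrict_mem measurableSet_Ioi] with y hy
  exact exp_neg_mul_mul_le_gaussian hc hx (hp y hy) (norm_nonneg _) (hg y hy)

lemma integrableOn_const_mul_gaussian (C : ℝ) {b : ℝ} (hb : 0 < b) (s : Set ℝ) :
    IntegrableOn (fun y ↦ C * Real.exp (-b * y ^ 2)) s :=
  ((integrable_exp_neg_mul_sq hb).const_mul C).integrableOn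

lemma integral_exp_neg_mul_norm_le (hc : 0 < c) (hp : ∀ y, 0 < y → c * y ^ 2 ≤ p y)
    (hg : ∀ y, 0 < y → ‖g y‖ ≤ K * Real.exp (a * y)) (hx : 0 < x) :
    ∫ y in Ioi 0, Real.exp (-(x * p y)) * ‖g y‖ ≤
      K * Real.exp (a ^ 2 / (2 * c * x)) * (√(π / (c * x / 2)) / 2) := by
  rw [← integral_gaussian_Ioi, ← integral_const_mul]
  exact integral_mono_of_nonneg (ae_of_all _ fun y ↦ by positivity)
    (integrableOn_const_mul_gaussian _ (by positivity) _)
    (ae_exp_neg_mul_norm_le_gaussian hc hp hg hx)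

variable [NormedSpace ℝ E]

lemma integrableOn_exp_neg_mul_smul (hc : 0 < c)
    (hpm : AEStronglyMeasurable p (volume.restrict (Ioi 0)))
    (hgm : AEStronglyMeasurable g (volume.restrict (Ioi 0)))
    (hp : ∀ y, 0 < y → c * y ^ 2 ≤ p y) (hg : ∀ y, 0 < y → ‖g y‖ ≤ K * Real.exp (a * y))
    (hx : 0 < x) :
    IntegrableOn (fun y ↦ Real.exp (-(x * p y)) • g y) (Ioi 0) := by
  refine (integrableOn_const_mul_gaussian (K * Real.exp (a ^ 2 / (2 * c * x)))
    (b := c * x / 2) (by positivity) (Ioi 0)).mono' ?_ ?_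
  · exact (Real.continuous_exp.comp_aestronglyMeasurable (hpm.const_mul x).neg).smul hgm
  · simpa only [norm_smul, Real.norm_eq_abs, Real.abs_exp] using
      ae_exp_neg_mul_norm_le_gaussian hc hp hg hx

theorem exists_norm_iteratedDerivWithin_laplaceTransform_le_rpow (hc : 0 < c)
    (hpm : AEStronglyMeasurable p (volume.restrict (Ioi 0)))
    (hgm : AEStronglyMeasurable g (volume.restrict (Ioi 0)))
    (hp : ∀ y, 0 < y → c * y ^ 2 ≤ p y) (hg : ∀ y, 0 < y → ‖g y‖ ≤ K * Real.exp (a * y))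
    (n : ℕ) {δ : ℝ} (hδ : 0 < δ) :
    ∃ C, ∀ x, δ ≤ x →
      ‖iteratedDerivWithin n (laplaceTransform (volume.restrict (Ioi 0)) p g) (Ioi 0) x‖ ≤
        C * x ^ (-(n : ℝ) - 1 / 2) := by
  have hK : 0 ≤ K :=
    nonneg_of_mul_nonneg_left ((norm_nonneg _).trans (hg 1 one_pos)) (Real.exp_pos _)
  refine ⟨n.factorial * 2 ^ n * (K * Real.exp (a ^ 2 / (c * δ)) * (√(4 * π / c) / 2)),
    fun x hδx ↦ ?_⟩
  have hx : 0 < x := hδ.trans_le hδx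
  have hrpow : x ^ (-(n : ℝ) - 1 / 2) = (x ^ n)⁻¹ * (√x)⁻¹ := by
    rw [Real.rpow_sub hx, Real.rpow_neg hx.le, Real.rpow_natCast, Real.sqrt_eq_rpow, div_eq_mul_inv]
  have hsqrt : √(π / (c * (x / 2) / 2)) = √(4 * π / c) * (√x)⁻¹ := by
    rw [← div_eq_mul_inv, ← Real.sqrt_div (by positivity)]
    congr 1
    field_simp
    norm_num
  have hexp : a ^ 2 / (2 * c * (x / 2)) ≤ a ^ 2 / (c * δ) := by
    rw [show 2 * c * (x / 2) = c * x by ring]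
    gcongr
  calc ‖iteratedDerivWithin n (laplaceTransform (volume.restrict (Ioi 0)) p g) (Ioi 0) x‖
      ≤ n.factorial * (2 / x) ^ n * ∫ y in Ioi 0, Real.exp (-(x / 2 * p y)) * ‖g y‖ :=
        norm_iteratedDerivWithin_laplaceTransform_le hpm (ae_nonneg_of_quadratic_le hc hp)
          (fun _ ↦ integrableOn_exp_neg_mul_smul hc hpm hgm hp hg) n hx
    _ ≤ n.factorial * (2 / x) ^ n *
          (K * Real.exp (a ^ 2 / (2 * c * (x / 2))) * (√(π / (c * (x / 2) / 2)) / 2)) := by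
        gcongr
        exact integral_exp_neg_mul_norm_le hc hp hg (by positivity)
    _ ≤ n.factorial * (2 / x) ^ n *
          (K * Real.exp (a ^ 2 / (c * δ)) * (√(π / (c * (x / 2) / 2)) / 2)) := by gcongr
    _ = _ := by
        rw [hsqrt, hrpow]
        ring

end GaussianDecay

section SteepestDescentPath

/-- The path `y ↦ π/2 - arctan (sinh y) + iy` of steepest descent for `exp(iξ sin z)` from the
saddle point `π/2` to `i∞`, parametrised by the imaginary part. -/
def steepestPath (y : ℝ) : ℂ := (π / 2 - Real.arctan (Real.sinh y) : ℝ) + y * I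

/-- The derivative of `steepestPath`. -/
def steepestPathDeriv (y : ℝ) : ℂ := I - (1 / Real.cosh y : ℝ)

/-- The phase along the path of steepest descent: there `i sin z = i - steepestPhase y`. -/
def steepestPhase (y : ℝ) : ℝ := Real.sinh y ^ 2 / Real.cosh y

lemma sqrt_one_add_sinh_sq (y : ℝ) : √(1 + Real.sinh y ^ 2) = Real.cosh y := by
  rw [← Real.cosh_sq', Real.sqrt_sq (Real.cosh_pos y).le]

lemma sin_arctan_sinh (y : ℝ) : Real.sin (Real.arctan (Real.sinh y)) = Real.tanh y := by
  rw [Real.sin_arctan, sqrt_one_add_sinh_sq, Real.tanh_eq_sinh_div_cosh]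

lemma cos_arctan_sinh (y : ℝ) : Real.cos (Real.arctan (Real.sinh y)) = 1 / Real.cosh y := by
  rw [Real.cos_arctan, sqrt_one_add_sinh_sq]

lemma one_add_sq_div_two_le_cosh (y : ℝ) : 1 + y ^ 2 / 2 ≤ Real.cosh y := by
  have hsinh : (y / 2) ^ 2 ≤ Real.sinh (y / 2) ^ 2 := by
    rw [sq_le_sq, Real.abs_sinh]
    exact Real.self_le_sinh_iff.mpr (abs_nonneg _)
  calc 1 + y ^ 2 / 2 = 1 + 2 * (y / 2) ^ 2 := by ring
    _ ≤ 1 + 2 * Real.sinh (y / 2) ^ 2 := by gcongr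
    _ = Real.cosh (2 * (y / 2)) := by rw [Real.cosh_two_mul, Real.cosh_sq]; ring
    _ = Real.cosh y := by rw [mul_div_cancel₀ y two_ne_zero]

lemma continuous_steepestPhase : Continuous steepestPhase :=
  (Real.continuous_sinh.pow 2).div Real.continuous_cosh fun y ↦ (Real.cosh_pos y).ne'

lemma steepestPhase_eq_tanh_mul_sinh (y : ℝ) : steepestPhase y = Real.tanh y * Real.sinh y := by
  rw [steepestPhase, Real.tanh_eq_sinh_div_cosh]
  ring

lemma sq_div_two_le_steepestPhase (y : ℝ) : 1 / 2 * y ^ 2 ≤ steepestPhase y := by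
  have hcosh := one_add_sq_div_two_le_cosh y
  rw [steepestPhase, le_div_iff₀ (Real.cosh_pos y), Real.sinh_sq]
  nlinarith [sq_nonneg y]

lemma steepestPhase_le_sinh {y : ℝ} (hy : 0 ≤ y) : steepestPhase y ≤ Real.sinh y := by
  rw [steepestPhase_eq_tanh_mul_sinh]
  exact mul_le_of_le_one_left (Real.sinh_nonneg_iff.mpr hy) (Real.tanh_lt_one y).le

lemma steepestPath_zero : steepestPath 0 = (π / 2 : ℝ) := by simp [steepestPath]

lemma sin_steepestPath (y : ℝ) : Complex.sin (steepestPath y) = 1 + I * steepestPhase y := by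
  have hcosh : (Real.cosh y : ℂ) ≠ 0 := by exact_mod_cast (Real.cosh_pos y).ne'
  rw [steepestPath, Complex.sin_add_mul_I, ← Complex.ofReal_sin, ← Complex.ofReal_cos,
    ← Complex.ofReal_cosh, ← Complex.ofReal_sinh, Real.sin_pi_div_two_sub,
    Real.cos_pi_div_two_sub, cos_arctan_sinh, sin_arctan_sinh, steepestPhase_eq_tanh_mul_sinh]
  push_cast at hcosh ⊢
  field_simp

lemma hasDerivAt_steepestPath (y : ℝ) : HasDerivAt steepestPath (steepestPathDeriv y) y := by
  have hre : HasDerivAt (fun y ↦ π / 2 - Real.arctan (Real.sinh y)) (-(1 / Real.cosh y)) y := by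
    refine ((Real.hasDerivAt_sinh y).arctan.const_sub _).congr_deriv ?_
    rw [← Real.cosh_sq']
    field_simp
  refine (hre.ofReal_comp.add ((hasDerivAt_id y).ofReal_comp.mul_const I)).congr_deriv ?_
  rw [steepestPathDeriv]
  push_cast
  ring

lemma continuous_steepestPath : Continuous steepestPath :=
  continuous_iff_continuousAt.mpr fun y ↦ (hasDerivAt_steepestPath y).continuousAt

lemma continuous_steepestPathDeriv : Continuous steepestPathDeriv := by
  have hsech : Continuous fun y ↦ 1 / Real.cosh y :=
    continuous_const.div Real.continuous_cosh fun y ↦ (Real.cosh_pos y).ne'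
  unfold steepestPathDeriv
  fun_prop

lemma norm_steepestPathDeriv_le (y : ℝ) : ‖steepestPathDeriv y‖ ≤ 2 := by
  have hsech : ‖((1 / Real.cosh y : ℝ) : ℂ)‖ ≤ 1 := by
    rw [Complex.norm_real, Real.norm_of_nonneg (by positivity), div_le_one (Real.cosh_pos y)]
    exact Real.one_le_cosh y
  calc ‖steepestPathDeriv y‖ ≤ ‖I‖ + ‖((1 / Real.cosh y : ℝ) : ℂ)‖ := norm_sub_le _ _
    _ ≤ 1 + 1 := by rw [Complex.norm_I]; gcongr
    _ = 2 := one_add_one_eq_two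

end SteepestDescentPath

section ContourDeformation

variable {E : Type*} [NormedAddCommGroup E] [NormedSpace ℂ E] [CompleteSpace E] {f : ℂ → E}

lemma exists_forall_integral_deriv_smul_comp_eq_sub (hf : Differentiable ℂ f) :
    ∃ F : ℂ → E, ∀ γ γ' : ℝ → ℂ, (∀ t, HasDerivAt γ (γ' t) t) → Continuous γ' →
      ∀ a b, ∫ t in a..b, γ' t • f (γ t) = F (γ b) - F (γ a) := by
  obtain ⟨F, hF⟩ := hf.isExactOn_univ
  refine ⟨F, fun γ γ' hγ hγ' a b ↦ ?_⟩
  have hγc : Continuous γ := continuous_iff_continuousAt.mpr fun t ↦ (hγ t).continuousAt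
  exact intervalIntegral.integral_eq_sub_of_hasDerivAt (f := fun t ↦ F (γ t))
    (fun t _ ↦ (hF (γ t) (mem_univ _)).scomp t (hγ t))
    ((hγ'.smul (hf.continuous.comp hγc)).intervalIntegrable a b)

lemma integral_real_sub_integral_imag_add_integral_steepestPath (hf : Differentiable ℂ f) (Y : ℝ) :
    (∫ a in (0 : ℝ)..π / 2, f a) - (∫ t in (0 : ℝ)..Y, I • f (t * I)) +
        ∫ y in (0 : ℝ)..Y, steepestPathDeriv y • f (steepestPath y) =
      ∫ a in (0 : ℝ)..π / 2 - Real.arctan (Real.sinh Y), f (a + Y * I) := by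
  obtain ⟨F, hF⟩ := exists_forall_integral_deriv_smul_comp_eq_sub hf
  have hreal := hF (fun a ↦ a) (fun _ ↦ 1) (fun a ↦ (hasDerivAt_id a).ofReal_comp)
    continuous_const 0 (π / 2)
  have himag := hF (fun t ↦ t * I) (fun _ ↦ I)
    (fun t ↦ by simpa using (hasDerivAt_id t).ofReal_comp.mul_const I) continuous_const 0 Y
  have htop := hF (fun a ↦ a + Y * I) (fun _ ↦ 1)
    (fun a ↦ (hasDerivAt_id a).ofReal_comp.add_const _) continuous_const 0
    (π / 2 - Real.arctan (Real.sinh Y))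
  simp only [one_smul] at hreal htop
  rw [hreal, himag, htop, hF _ _ hasDerivAt_steepestPath continuous_steepestPathDeriv,
    steepestPath_zero, steepestPath]
  simp

theorem integral_real_sub_integral_imag_eq_neg_integral_steepestPath (hf : Differentiable ℂ f)
    (himag : IntegrableOn (fun t : ℝ ↦ I • f (t * I)) (Ioi 0))
    (hpath : IntegrableOn (fun y ↦ steepestPathDeriv y • f (steepestPath y)) (Ioi 0))
    (htop : Tendsto (fun Y : ℝ ↦ ∫ a in (0 : ℝ)..π / 2 - Real.arctan (Real.sinh Y), f (a + Y * I))
      atTop (𝓝 0)) :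
    (∫ a in (0 : ℝ)..π / 2, f a) - ∫ t in Ioi (0 : ℝ), I • f (t * I) =
      -∫ y in Ioi 0, steepestPathDeriv y • f (steepestPath y) := by
  have hlim := ((intervalIntegral_tendsto_integral_Ioi 0 himag tendsto_id).const_sub
    (∫ a in (0 : ℝ)..π / 2, f a)).add (intervalIntegral_tendsto_integral_Ioi 0 hpath tendsto_id)
  simp only [id, integral_real_sub_integral_imag_add_integral_steepestPath hf] at hlim
  exact eq_neg_of_add_eq_zero_left (tendsto_nhds_unique hlim htop)

end ContourDeformation

section HankelIntegrand

variable {ν : ℕ} {ξ : ℝ}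

/-- The factor `exp(-iνz) + (-1)^ν exp(iνz)` of `hankelIntegrand`, which does not depend on `ξ`. -/
def hankelAmplitude (ν : ℕ) (z : ℂ) : ℂ :=
  Complex.exp (-(I * ν * z)) + (-1) ^ ν * Complex.exp (I * ν * z)

/-- The entire function whose integrals over `[0, π/2]` and over the positive imaginary axis yield
the integrals in `besselJ` and `besselY`. The two summands of the amplitude come from folding
`[0, π]` onto `[0, π/2]` by `θ ↦ π - θ`. -/
def hankelIntegrand (ν : ℕ) (ξ : ℝ) (z : ℂ) : ℂ :=
  Complex.exp (I * ξ * Complex.sin z) * hankelAmplitude ν z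

lemma differentiable_hankelAmplitude : Differentiable ℂ (hankelAmplitude ν) := by
  unfold hankelAmplitude
  fun_prop

lemma differentiable_hankelIntegrand : Differentiable ℂ (hankelIntegrand ν ξ) :=
  (Complex.differentiable_sin.const_mul (I * ξ)).cexp.mul differentiable_hankelAmplitude

lemma norm_hankelAmplitude_le (a : ℝ) {b : ℝ} (hb : 0 ≤ b) :
    ‖hankelAmplitude ν (a + b * I)‖ ≤ 2 * Real.exp (ν * b) := by
  have hνb : (0 : ℝ) ≤ ν * b := by positivity
  calc ‖hankelAmplitude ν (a + b * I)‖ ≤ Real.exp (ν * b) + Real.exp (-(ν * b)) := by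
        refine (norm_add_le _ _).trans_eq ?_
        simp [Complex.norm_exp]
    _ ≤ Real.exp (ν * b) + Real.exp (ν * b) := by
        gcongr
        linarith
    _ = 2 * Real.exp (ν * b) := (two_mul _).symm

lemma norm_hankelIntegrand (a b : ℝ) :
    ‖hankelIntegrand ν ξ (a + b * I)‖ =
      Real.exp (-(ξ * (Real.cos a * Real.sinh b))) * ‖hankelAmplitude ν (a + b * I)‖ := by
  have hre : (I * ξ * Complex.sin (a + b * I)).re = -(ξ * (Real.cos a * Real.sinh b)) := by
    rw [Complex.sin_add_mul_I]
    norm_cast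
    simp [-Complex.ofReal_sin, -Complex.ofReal_cos, -Complex.ofReal_cosh, -Complex.ofReal_sinh]
  rw [hankelIntegrand, norm_mul, Complex.norm_exp, hre]

lemma hankelIntegrand_mul_I (t : ℝ) :
    hankelIntegrand ν ξ (t * I) = Real.exp (-(ξ * Real.sinh t)) • hankelAmplitude ν (t * I) := by
  rw [hankelIntegrand, Complex.sin_mul_I, Complex.real_smul]
  push_cast
  congr 2
  linear_combination (ξ * Complex.sinh t) * Complex.I_mul_I

lemma hankelAmplitude_mul_I (t : ℝ) :
    hankelAmplitude ν (t * I) =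
      (Real.exp (ν * t) + (-1 : ℝ) ^ ν * Real.exp (-(ν * t)) : ℝ) := by
  have hI : I * ν * (t * I) = -(ν * t) := by linear_combination (ν * t) * Complex.I_mul_I
  rw [hankelAmplitude, hI, neg_neg]
  push_cast
  rfl

lemma hankelIntegrand_ofReal (a : ℝ) :
    hankelIntegrand ν ξ a = Complex.exp ((ξ * Real.sin a - ν * a : ℝ) * I) +
      Complex.exp ((ξ * Real.sin (π - a) - ν * (π - a) : ℝ) * I) := by
  have hν : (-1 : ℂ) ^ ν = Complex.exp (-(ν * π * I)) := by
    rw [mul_assoc, ← mul_neg, Complex.exp_nat_mul, Complex.exp_neg, Complex.exp_pi_mul_I,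
      inv_neg_one]
  rw [hankelIntegrand, hankelAmplitude, hν, mul_add, ← Complex.exp_add, ← Complex.exp_add,
    ← Complex.exp_add, Real.sin_pi_sub]
  push_cast
  ring_nf

/-- The amplitude of `hankelIntegrand` along the path of steepest descent, including the
derivative of the path. -/
def steepestAmplitude (ν : ℕ) (y : ℝ) : ℂ :=
  steepestPathDeriv y * hankelAmplitude ν (steepestPath y)

lemma continuous_steepestAmplitude : Continuous (steepestAmplitude ν) :=
  continuous_steepestPathDeriv.mul
    (differentiable_hankelAmplitude.continuous.comp continuous_steepestPath)

lemma norm_steepestAmplitude_le {y : ℝ} (hy : 0 ≤ y) :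
    ‖steepestAmplitude ν y‖ ≤ 4 * Real.exp (ν * y) :=
  calc ‖steepestAmplitude ν y‖ = ‖steepestPathDeriv y‖ * ‖hankelAmplitude ν (steepestPath y)‖ :=
        norm_mul _ _
    _ ≤ 2 * (2 * Real.exp (ν * y)) := by
        gcongr
        · exact norm_steepestPathDeriv_le y
        · exact norm_hankelAmplitude_le _ hy
    _ = 4 * Real.exp (ν * y) := by ring

lemma steepestPathDeriv_smul_hankelIntegrand (y : ℝ) :
    steepestPathDeriv y • hankelIntegrand ν ξ (steepestPath y) =
      Complex.exp (I * ξ) * (Real.exp (-(ξ * steepestPhase y)) • steepestAmplitude ν y) := by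
  have hexp : Complex.exp (I * ξ * Complex.sin (steepestPath y)) =
      Complex.exp (I * ξ) * Real.exp (-(ξ * steepestPhase y)) := by
    rw [sin_steepestPath, Complex.ofReal_exp, ← Complex.exp_add]
    congr 1
    push_cast
    linear_combination (ξ * steepestPhase y) * Complex.I_mul_I
  rw [hankelIntegrand, hexp, steepestAmplitude, smul_eq_mul, Complex.real_smul]
  ring

lemma integrableOn_hankelIntegrand_steepestPath (hξ : 0 < ξ) :
    IntegrableOn (fun y ↦ steepestPathDeriv y • hankelIntegrand ν ξ (steepestPath y)) (Ioi 0) := by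
  simp only [steepestPathDeriv_smul_hankelIntegrand]
  exact (integrableOn_exp_neg_mul_smul one_half_pos
    continuous_steepestPhase.aestronglyMeasurable continuous_steepestAmplitude.aestronglyMeasurable
    (fun y _ ↦ sq_div_two_le_steepestPhase y) (fun _ hy ↦ norm_steepestAmplitude_le hy.le)
    hξ).const_mul _

lemma integrableOn_hankelIntegrand_imag (hξ : 0 < ξ) :
    IntegrableOn (fun t : ℝ ↦ I • hankelIntegrand ν ξ (t * I)) (Ioi 0) := by
  have hamp : Continuous fun t : ℝ ↦ hankelAmplitude ν (t * I) :=
    differentiable_hankelAmplitude.continuous.comp (by fun_prop)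
  simp only [hankelIntegrand_mul_I]
  refine (integrableOn_exp_neg_mul_smul (K := 2) (a := ν) one_half_pos
    Real.continuous_sinh.aestronglyMeasurable hamp.aestronglyMeasurable
    (fun y hy ↦ (sq_div_two_le_steepestPhase y).trans (steepestPhase_le_sinh hy.le))
    (fun y hy ↦ ?_) hξ).smul I
  simpa using norm_hankelAmplitude_le (ν := ν) 0 hy.le

lemma steepestPhase_le_cos_mul_sinh {a Y : ℝ} (hY : 0 ≤ Y) (ha : 0 ≤ a)
    (haY : a ≤ π / 2 - Real.arctan (Real.sinh Y)) :
    steepestPhase Y ≤ Real.cos a * Real.sinh Y := by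
  have hsinh : 0 ≤ Real.sinh Y := Real.sinh_nonneg_iff.mpr hY
  have hcos : Real.tanh Y ≤ Real.cos a := by
    rw [← sin_arctan_sinh, ← Real.cos_pi_div_two_sub]
    refine Real.cos_le_cos_of_nonneg_of_le_pi ha ?_ haY
    linarith [Real.arctan_nonneg.mpr hsinh, Real.pi_pos]
  rw [steepestPhase_eq_tanh_mul_sinh]
  gcongr

lemma norm_integral_hankelIntegrand_top_le (hξ : 0 < ξ) {Y : ℝ} (hY : 0 ≤ Y) :
    ‖∫ a in (0 : ℝ)..π / 2 - Real.arctan (Real.sinh Y), hankelIntegrand ν ξ (a + Y * I)‖ ≤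
      2 * Real.exp (ν ^ 2 / (2 * (1 / 2) * ξ)) * Real.exp (-(1 / 2 * ξ / 2) * Y ^ 2) * (π / 2) := by
  have hend : 0 ≤ π / 2 - Real.arctan (Real.sinh Y) :=
    sub_nonneg.mpr (Real.arctan_lt_pi_div_two _).le
  refine (intervalIntegral.norm_integral_le_of_norm_le_const fun a ha ↦ ?_).trans
    (mul_le_mul_of_nonneg_left ?_ (by positivity))
  · rw [uIoc_of_le hend] at ha
    rw [norm_hankelIntegrand]
    exact exp_neg_mul_mul_le_gaussian one_half_pos hξ
      ((sq_div_two_le_steepestPhase Y).trans (steepestPhase_le_cos_mul_sinh hY ha.1.le ha.2))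
      (norm_nonneg _) (norm_hankelAmplitude_le a hY)
  · rw [sub_zero, abs_of_nonneg hend, sub_le_self_iff]
    exact Real.arctan_nonneg.mpr (Real.sinh_nonneg_iff.mpr hY)

lemma tendsto_integral_hankelIntegrand_top (hξ : 0 < ξ) :
    Tendsto (fun Y : ℝ ↦ ∫ a in (0 : ℝ)..π / 2 - Real.arctan (Real.sinh Y),
      hankelIntegrand ν ξ (a + Y * I)) atTop (𝓝 0) := by
  have hgauss : Tendsto (fun Y : ℝ ↦ Real.exp (-(1 / 2 * ξ / 2) * Y ^ 2)) atTop (𝓝 0) :=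
    Real.tendsto_exp_atBot.comp
      ((tendsto_pow_atTop two_ne_zero).const_mul_atTop_of_neg (by linarith))
  have hbound :=
    (hgauss.const_mul (2 * Real.exp (ν ^ 2 / (2 * (1 / 2) * ξ)))).mul_const (π / 2)
  rw [mul_zero, zero_mul] at hbound
  refine squeeze_zero_norm' ?_ hbound
  filter_upwards [eventually_ge_atTop 0] with Y hY
  exact norm_integral_hankelIntegrand_top_le hξ hY

theorem integral_hankelIntegrand_real_sub_imag_eq_laplaceTransform (hξ : 0 < ξ) :
    (∫ a in (0 : ℝ)..π / 2, hankelIntegrand ν ξ a) -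
        ∫ t in Ioi (0 : ℝ), I • hankelIntegrand ν ξ (t * I) =
      -(Complex.exp (I * ξ) *
        laplaceTransform (volume.restrict (Ioi 0)) steepestPhase (steepestAmplitude ν) ξ) := by
  rw [integral_real_sub_integral_imag_eq_neg_integral_steepestPath differentiable_hankelIntegrand
    (integrableOn_hankelIntegrand_imag hξ) (integrableOn_hankelIntegrand_steepestPath hξ)
    (tendsto_integral_hankelIntegrand_top hξ)]
  simp only [steepestPathDeriv_smul_hankelIntegrand, integral_const_mul, laplaceTransform]

end HankelIntegrand

section Bessel

variable {ν : ℕ} {ξ : ℝ}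

lemma integral_eq_integral_half_add_reflect {E : Type*} [NormedAddCommGroup E] [NormedSpace ℝ E]
    {g : ℝ → E} (hg : Continuous g) (b : ℝ) :
    ∫ x in (0 : ℝ)..b, g x = ∫ x in (0 : ℝ)..b / 2, (g x + g (b - x)) := by
  have hreflect : ∫ x in (0 : ℝ)..b / 2, g (b - x) = ∫ x in b / 2..b, g x := by
    rw [intervalIntegral.integral_comp_sub_left, sub_zero, sub_half]
  rw [intervalIntegral.integral_add (hg.intervalIntegrable _ _)
    ((by fun_prop : Continuous fun x ↦ g (b - x)).intervalIntegrable _ _), hreflect,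
    intervalIntegral.integral_add_adjacent_intervals (hg.intervalIntegrable _ _)
    (hg.intervalIntegrable _ _)]

lemma integral_exp_ofReal_mul_I {φ : ℝ → ℝ} (hφ : Continuous φ) (a b : ℝ) :
    ∫ x in a..b, Complex.exp (φ x * I) =
      (∫ x in a..b, Real.cos (φ x) : ℝ) + (∫ x in a..b, Real.sin (φ x) : ℝ) * I := by
  rw [← intervalIntegral.integral_ofReal, ← intervalIntegral.integral_ofReal,
    ← intervalIntegral.integral_mul_const, ← intervalIntegral.integral_add
    ((by fun_prop : Continuous _).intervalIntegrable _ _)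
    ((by fun_prop : Continuous _).intervalIntegrable _ _)]
  simp only [Complex.exp_mul_I, Complex.ofReal_cos, Complex.ofReal_sin]

lemma integral_hankelIntegrand_real :
    ∫ a in (0 : ℝ)..π / 2, hankelIntegrand ν ξ a =
      (∫ θ in (0 : ℝ)..π, Real.cos (ν * θ - ξ * Real.sin θ) : ℝ) +
        (∫ θ in (0 : ℝ)..π, Real.sin (ξ * Real.sin θ - ν * θ) : ℝ) * I := by
  have hcos (θ : ℝ) : Real.cos (ν * θ - ξ * Real.sin θ) = Real.cos (ξ * Real.sin θ - ν * θ) := by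
    rw [← Real.cos_neg, neg_sub]
  simp only [hcos, hankelIntegrand_ofReal]
  rw [← integral_exp_ofReal_mul_I (by fun_prop)]
  exact (integral_eq_integral_half_add_reflect
    (g := fun θ ↦ Complex.exp ((ξ * Real.sin θ - ν * θ : ℝ) * I)) (by fun_prop) π).symm

lemma integral_hankelIntegrand_imag :
    ∫ t in Ioi (0 : ℝ), I • hankelIntegrand ν ξ (t * I) =
      (∫ t in Ioi (0 : ℝ), (Real.exp (ν * t) + (-1 : ℝ) ^ ν * Real.exp (-(ν * t))) *
        Real.exp (-(ξ * Real.sinh t)) : ℝ) * I := by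
  simp only [hankelIntegrand_mul_I, hankelAmplitude_mul_I, Complex.real_smul,
    ← Complex.ofReal_mul]
  rw [integral_smul, integral_complex_ofReal, smul_eq_mul, mul_comm]
  simp only [mul_comm (Real.exp (-(ξ * _)))]

lemma besselJ_add_besselY_mul_I :
    (besselJ ν ξ : ℂ) + besselY ν ξ * I =
      1 / π * ((∫ a in (0 : ℝ)..π / 2, hankelIntegrand ν ξ a) -
        ∫ t in Ioi (0 : ℝ), I • hankelIntegrand ν ξ (t * I)) := by
  rw [integral_hankelIntegrand_real, integral_hankelIntegrand_imag, besselJ, besselY]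
  push_cast
  ring

lemma e_div_two_mul_pi (ξ : ℝ) : e (ξ / (2 * π)) = Complex.exp (I * ξ) := by
  have hπ : (π : ℂ) ≠ 0 := by exact_mod_cast Real.pi_ne_zero
  rw [e]
  push_cast
  field_simp

/-- The non-oscillating factor of the Hankel function: `J_ν(ξ) + i Y_ν(ξ) = 2 e(ξ/2π) v(ξ/π)` for
`v = hankelSymbol ν`. The factor `π` in the phase accounts for the argument `ξ/π`. -/
def hankelSymbol (ν : ℕ) (x : ℝ) : ℂ :=
  -(1 / (2 * π)) * laplaceTransform (volume.restrict (Ioi 0)) (fun y ↦ π * steepestPhase y)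
    (steepestAmplitude ν) x

theorem besselJ_add_besselY_mul_I_eq_hankelSymbol (hξ : 0 < ξ) :
    (besselJ ν ξ : ℂ) + besselY ν ξ * I = 2 * (e (ξ / (2 * π)) * hankelSymbol ν (ξ / π)) := by
  rw [besselJ_add_besselY_mul_I, integral_hankelIntegrand_real_sub_imag_eq_laplaceTransform hξ,
    hankelSymbol, laplaceTransform_const_mul_phase Real.pi_ne_zero, e_div_two_mul_pi]
  ring

lemma quadratic_le_pi_mul_steepestPhase (y : ℝ) : π / 2 * y ^ 2 ≤ π * steepestPhase y := by
  rw [div_eq_mul_one_div, mul_assoc]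
  exact mul_le_mul_of_nonneg_left (sq_div_two_le_steepestPhase y) Real.pi_pos.le

lemma continuous_pi_mul_steepestPhase : Continuous fun y ↦ π * steepestPhase y :=
  continuous_steepestPhase.const_mul π

theorem contDiffOn_hankelSymbol : ContDiffOn ℝ (⊤ : ℕ∞) (hankelSymbol ν) (Ioi 0) :=
  contDiffOn_const.mul <| contDiffOn_laplaceTransform
    continuous_pi_mul_steepestPhase.aestronglyMeasurable
    (ae_nonneg_of_quadratic_le Real.pi_div_two_pos fun y _ ↦ quadratic_le_pi_mul_steepestPhase y)
    fun _ ↦ integrableOn_exp_neg_mul_smul Real.pi_div_two_pos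
      continuous_pi_mul_steepestPhase.aestronglyMeasurable
      continuous_steepestAmplitude.aestronglyMeasurable
      (fun y _ ↦ quadratic_le_pi_mul_steepestPhase y) fun _ hy ↦ norm_steepestAmplitude_le hy.le

theorem exists_norm_iteratedDerivWithin_hankelSymbol_le_rpow (ν n : ℕ) {δ : ℝ} (hδ : 0 < δ) :
    ∃ C, ∀ x, δ ≤ x →
      ‖iteratedDerivWithin n (hankelSymbol ν) (Ioi 0) x‖ ≤ C * x ^ (-(n : ℝ) - 1 / 2) := by
  obtain ⟨C, hC⟩ := exists_norm_iteratedDerivWithin_laplaceTransform_le_rpow Real.pi_div_two_pos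
    continuous_pi_mul_steepestPhase.aestronglyMeasurable
    (continuous_steepestAmplitude (ν := ν)).aestronglyMeasurable
    (fun y _ ↦ quadratic_le_pi_mul_steepestPhase y)
    (fun _ hy ↦ norm_steepestAmplitude_le hy.le) n hδ
  refine ⟨‖-(1 / (2 * π) : ℂ)‖ * C, fun x hx ↦ ?_⟩
  unfold hankelSymbol
  rw [iteratedDerivWithin_const_mul_field, norm_mul, mul_assoc]
  exact mul_le_mul_of_nonneg_left (hC x hx) (norm_nonneg _)

end Bessel

/-- Bessel functions as oscillating functions: `J_ν(ξ) = 2 Re(e(ξ/2π) v_J(ξ/π))` and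
`Y_ν(ξ) = 2 Re(e(ξ/2π) v_Y(ξ/π))` with smooth `v_J, v_Y` on `(0,∞)` all of whose
derivatives satisfy `v^{(μ)}(ξ) ≪ ξ^{-μ-1/2}` for `ξ ≥ 1`. -/
theorem besselJ_besselY_oscillating (ν : ℕ) :
    ∃ vJ vY : ℝ → ℂ,
      ContDiffOn ℝ (⊤ : ℕ∞) vJ (Set.Ioi 0) ∧ ContDiffOn ℝ (⊤ : ℕ∞) vY (Set.Ioi 0) ∧
      (∀ ξ : ℝ, 0 < ξ →
        besselJ ν ξ = 2 * (e (ξ / (2 * Real.pi)) * vJ (ξ / Real.pi)).re ∧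
        besselY ν ξ = 2 * (e (ξ / (2 * Real.pi)) * vY (ξ / Real.pi)).re) ∧
      (∀ μ : ℕ, ∃ C : ℝ, ∀ ξ : ℝ, 1 ≤ ξ →
        ‖iteratedDerivWithin μ vJ (Set.Ioi 0) ξ‖ ≤ C * ξ ^ (-(μ : ℝ) - 1 / 2) ∧
        ‖iteratedDerivWithin μ vY (Set.Ioi 0) ξ‖ ≤ C * ξ ^ (-(μ : ℝ) - 1 / 2)) := by
  refine ⟨hankelSymbol ν, fun x ↦ -I * hankelSymbol ν x, contDiffOn_hankelSymbol,
    contDiffOn_const.mul contDiffOn_hankelSymbol, fun ξ hξ ↦ ?_, fun μ ↦ ?_⟩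
  · have hH := besselJ_add_besselY_mul_I_eq_hankelSymbol (ν := ν) hξ
    set w := e (ξ / (2 * π)) * hankelSymbol ν (ξ / π) with hw
    rw [mul_left_comm, ← hw]
    exact ⟨by simpa using congrArg Complex.re hH, by simpa using congrArg Complex.im hH⟩
  · obtain ⟨C, hC⟩ := exists_norm_iteratedDerivWithin_hankelSymbol_le_rpow ν μ one_pos
    refine ⟨C, fun ξ hξ ↦ ⟨hC ξ hξ, ?_⟩⟩
    rw [iteratedDerivWithin_const_mul_field, norm_mul, norm_neg, Complex.norm_I, one_mul]
    exact hC ξ hξ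
end
end

section
/- Define v_Y : (0,∞) → ℂ by the (conditionally convergent improper) integral v_Y(ξ) := −(2/π)·∫_0^∞ e(y²)·(y² + ξ)^{−1/2} dy. Then v_Y is smooth on (0,∞), for all ξ > 0 one has Y_0(ξ) = 2·Re( e(ξ/(2π))·v_Y(ξ/π) ), and for every integer μ ≥ 0 there is a constant C_μ with |v_Y^{(μ)}(ξ)| ≤ C_μ·ξ^{−μ−1/2} for all ξ ≥ 1. -/
noncomputable section

open Filter MeasureTheory

/-- The Bessel function `Y₀(ξ) = -(2/π) ∫_0^∞ cos(ξ cosh t) dt` (as an improper integral). -/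
def Y₀ (ξ : ℝ) : ℝ :=
  -(2 / Real.pi) *
    limUnder atTop (fun T : ℝ => ∫ t in (0 : ℝ)..T, Real.cos (ξ * Real.cosh t))

/-- `v_Y(ξ) = -(2/π) ∫_0^∞ e(y²) (y² + ξ)^{-1/2} dy` (as an improper integral). -/
def vY (ξ : ℝ) : ℂ :=
  -(2 / Real.pi) *
    limUnder atTop (fun T : ℝ => ∫ y in (0 : ℝ)..T, e (y ^ 2) / Real.sqrt (y ^ 2 + ξ))

/-! Integrating by parts against the Fresnel integral `F(y) = ∫_0^y e(u²) du`, which is bounded,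
and then substituting `u = y²` turns `v_Y(ξ)` into the absolutely convergent integral
`-(1/π) ∫_0^∞ (u + ξ)^{-3/2} F(√u) du`. Such a transform of a bounded function may be differentiated
under the integral sign; every derivative raises the exponent `3/2` by one, whence smoothness and
decay. The Bessel integral becomes `v_Y` under `y = √(ξ/π) sinh (t/2)`, because
`cosh t = 1 + 2 sinh² (t/2)`. -/

open scoped Topology

variable {E : Type*} [NormedAddCommGroup E] [NormedSpace ℝ E]

section StieltjesTransform

/-- The generalized Stieltjes transform of order `s` of a function `f` on the half-line, as an
absolutely convergent integral; for bounded `f` this requires `1 < s`. -/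
def stieltjesTransform (s : ℝ) (f : ℝ → E) (ξ : ℝ) : E :=
  ∫ u in Set.Ioi 0, (u + ξ) ^ (-s) • f u

variable {s ξ A : ℝ} {f : ℝ → E}

lemma integrableOn_Ioi_add_rpow_neg (hs : 1 < s) (hξ : 0 < ξ) :
    IntegrableOn (fun u : ℝ => (u + ξ) ^ (-s)) (Set.Ioi 0) :=
  integrableOn_add_rpow_Ioi_of_lt (by linarith) (by linarith)

lemma integral_Ioi_add_rpow_neg (hs : 1 < s) (hξ : 0 < ξ) :
    ∫ u in Set.Ioi (0 : ℝ), (u + ξ) ^ (-s) = ξ ^ (1 - s) / (s - 1) := by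
  have hshift := (measurePreserving_add_right volume ξ).setIntegral_preimage_emb
    (measurableEmbedding_addRight ξ) (fun u : ℝ => u ^ (-s)) (Set.Ioi ξ)
  rw [Set.preimage_add_const_Ioi, sub_self] at hshift
  rw [hshift, integral_Ioi_rpow_of_lt (by linarith) hξ, show -s + 1 = -(s - 1) by ring,
    neg_div_neg_eq, neg_sub]

lemma aestronglyMeasurable_add_rpow_smul
    (hf : AEStronglyMeasurable f (volume.restrict (Set.Ioi 0))) (s ξ : ℝ) :
    AEStronglyMeasurable (fun u : ℝ => (u + ξ) ^ (-s) • f u) (volume.restrict (Set.Ioi 0)) :=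
  (by fun_prop : Measurable fun u : ℝ => (u + ξ) ^ (-s)).aestronglyMeasurable.smul hf

lemma norm_add_rpow_smul_le (hA : ∀ u > 0, ‖f u‖ ≤ A) (hξ : 0 < ξ) :
    ∀ᵐ u ∂volume.restrict (Set.Ioi 0), ‖(u + ξ) ^ (-s) • f u‖ ≤ (u + ξ) ^ (-s) * A := by
  filter_upwards [ae_restrict_mem measurableSet_Ioi] with u (hu : 0 < u)
  rw [norm_smul, Real.norm_of_nonneg (by positivity)]
  gcongr
  exact hA u hu

lemma integrableOn_add_rpow_smul (hf : AEStronglyMeasurable f (volume.restrict (Set.Ioi 0)))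
    (hA : ∀ u > 0, ‖f u‖ ≤ A) (hs : 1 < s) (hξ : 0 < ξ) :
    IntegrableOn (fun u : ℝ => (u + ξ) ^ (-s) • f u) (Set.Ioi 0) :=
  ((integrableOn_Ioi_add_rpow_neg hs hξ).mul_const A).mono'
    (aestronglyMeasurable_add_rpow_smul hf s ξ) (norm_add_rpow_smul_le hA hξ)

lemma norm_stieltjesTransform_le (hA : ∀ u > 0, ‖f u‖ ≤ A) (hs : 1 < s) (hξ : 0 < ξ) :
    ‖stieltjesTransform s f ξ‖ ≤ ξ ^ (1 - s) / (s - 1) * A := by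
  rw [← integral_Ioi_add_rpow_neg hs hξ, ← integral_mul_const]
  exact norm_integral_le_of_norm_le ((integrableOn_Ioi_add_rpow_neg hs hξ).mul_const A)
    (norm_add_rpow_smul_le hA hξ)

lemma hasDerivAt_stieltjesTransform (hf : AEStronglyMeasurable f (volume.restrict (Set.Ioi 0)))
    (hA : ∀ u > 0, ‖f u‖ ≤ A) (hs : 1 < s) (hξ : 0 < ξ) :
    HasDerivAt (stieltjesTransform s f) (-s • stieltjesTransform (s + 1) f ξ) ξ := by
  have h_deriv : ∀ u > 0, ∀ x ∈ Set.Ioi (ξ / 2), HasDerivAt (fun x => (u + x) ^ (-s) • f u)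
      (-s • (u + x) ^ (-(s + 1)) • f u) x := fun u hu x (hx : ξ / 2 < x) => by
    have h_ne : u + x ≠ 0 := (by linarith : 0 < u + x).ne'
    have := ((hasDerivAt_id x).const_add u).rpow_const (p := -s) (Or.inl h_ne)
    refine (this.smul_const (f u)).congr_deriv ?_
    rw [smul_smul, one_mul, id, show -s - 1 = -(s + 1) by ring]
  have h_bound : ∀ u > 0, ∀ x ∈ Set.Ioi (ξ / 2), ‖-s • (u + x) ^ (-(s + 1)) • f u‖ ≤
      s * ((u + ξ / 2) ^ (-(s + 1)) * A) := fun u hu x (hx : ξ / 2 < x) => by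
    have hx0 : 0 < x := by linarith
    rw [norm_smul, norm_smul, norm_neg, Real.norm_of_nonneg (by linarith),
      Real.norm_of_nonneg (by positivity)]
    gcongr ?_ * (?_ * ?_)
    · exact Real.rpow_le_rpow_of_nonpos (by positivity) (by linarith) (by linarith)
    · exact hA u hu
  rw [stieltjesTransform, ← integral_smul]
  exact (hasDerivAt_integral_of_dominated_loc_of_deriv_le (Ioi_mem_nhds (half_lt_self hξ))
    (.of_forall fun x => aestronglyMeasurable_add_rpow_smul hf s x)
    (integrableOn_add_rpow_smul hf hA hs hξ)
    ((aestronglyMeasurable_add_rpow_smul hf (s + 1) ξ).const_smul (-s))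
    (ae_restrict_of_forall_mem measurableSet_Ioi h_bound)
    (((integrableOn_Ioi_add_rpow_neg (by linarith) (half_pos hξ)).mul_const A).const_mul s)
    (ae_restrict_of_forall_mem measurableSet_Ioi h_deriv)).2

lemma iteratedDerivWithin_stieltjesTransform
    (hf : AEStronglyMeasurable f (volume.restrict (Set.Ioi 0))) (hA : ∀ u > 0, ‖f u‖ ≤ A)
    (hs : 1 < s) (n : ℕ) :
    Set.EqOn (iteratedDerivWithin n (stieltjesTransform s f) (Set.Ioi 0))
      (((-1) ^ n * (ascPochhammer ℝ n).eval s) • stieltjesTransform (s + n) f) (Set.Ioi 0) := by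
  induction n with
  | zero => intro ξ _; simp
  | succ n ih =>
    intro ξ (hξ : 0 < ξ)
    have hsn : 1 < s + n := by linarith [n.cast_nonneg (α := ℝ)]
    rw [iteratedDerivWithin_succ, derivWithin_congr ih (ih hξ),
      ((hasDerivAt_stieltjesTransform hf hA hsn hξ).const_smul _).hasDerivWithinAt.derivWithin
        (isOpen_Ioi.uniqueDiffWithinAt hξ), Pi.smul_apply, smul_smul, ascPochhammer_succ_eval,
      Nat.cast_succ, ← add_assoc]
    ring_nf

lemma contDiffOn_stieltjesTransform (hf : AEStronglyMeasurable f (volume.restrict (Set.Ioi 0)))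
    (hA : ∀ u > 0, ‖f u‖ ≤ A) (hs : 1 < s) :
    ContDiffOn ℝ (⊤ : ℕ∞) (stieltjesTransform s f) (Set.Ioi 0) := by
  refine contDiffOn_of_differentiableOn_deriv fun n _ => ?_
  refine DifferentiableOn.congr (fun ξ (hξ : 0 < ξ) => ?_)
    (iteratedDerivWithin_stieltjesTransform hf hA hs n)
  have hsn : 1 < s + n := by linarith [n.cast_nonneg (α := ℝ)]
  exact ((hasDerivAt_stieltjesTransform hf hA hsn hξ).const_smul
    _).differentiableAt.differentiableWithinAt

lemma norm_iteratedDerivWithin_stieltjesTransform_le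
    (hf : AEStronglyMeasurable f (volume.restrict (Set.Ioi 0))) (hA : ∀ u > 0, ‖f u‖ ≤ A)
    (hs : 1 < s) (n : ℕ) (hξ : 0 < ξ) :
    ‖iteratedDerivWithin n (stieltjesTransform s f) (Set.Ioi 0) ξ‖ ≤
      (ascPochhammer ℝ n).eval s * (ξ ^ (1 - (s + n)) / (s + n - 1) * A) := by
  have hsn : 1 < s + n := by linarith [n.cast_nonneg (α := ℝ)]
  have h_pochhammer : 0 < (ascPochhammer ℝ n).eval s := ascPochhammer_pos n s (by linarith)
  rw [iteratedDerivWithin_stieltjesTransform hf hA hs n hξ, Pi.smul_apply, norm_smul, norm_mul,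
    norm_pow, norm_neg, norm_one, one_pow, one_mul, Real.norm_of_nonneg h_pochhammer.le]
  gcongr
  exact norm_stieltjesTransform_le hA hsn hξ

end StieltjesTransform

section IntegrationByParts

variable {s ξ A : ℝ} {f : ℝ → E}

lemma hasDerivAt_sq_add_rpow_neg (s : ℝ) (hξ : 0 < ξ) (y : ℝ) :
    HasDerivAt (fun y : ℝ => (y ^ 2 + ξ) ^ (-s)) (2 * y * (-s) * (y ^ 2 + ξ) ^ (-(s + 1))) y := by
  have h_base : HasDerivAt (fun y : ℝ => y ^ 2 + ξ) (2 * y) y := by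
    simpa using (hasDerivAt_pow 2 y).add_const ξ
  have := h_base.rpow_const (p := -s) (Or.inl (by positivity))
  rwa [show -s - 1 = -(s + 1) by ring] at this

lemma continuous_integral_sqrt (hf : Continuous f) :
    Continuous fun u : ℝ => ∫ v in 0..√u, f v :=
  (intervalIntegral.continuous_primitive (fun a b => hf.intervalIntegrable a b) 0).comp
    Real.continuous_sqrt

variable [CompleteSpace E]

lemma norm_integral_smul_deriv_le {a b : ℝ} {g g' : ℝ → ℝ} {F F' : ℝ → E} (hab : a ≤ b)
    (hg : ∀ x ∈ Set.uIcc a b, HasDerivAt g (g' x) x)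
    (hF : ∀ x ∈ Set.uIcc a b, HasDerivAt F (F' x) x)
    (hg' : IntervalIntegrable g' volume a b) (hF' : IntervalIntegrable F' volume a b)
    (hg'_nonpos : ∀ x ∈ Set.Icc a b, g' x ≤ 0) (hgb : 0 ≤ g b)
    (hA : ∀ x ∈ Set.Icc a b, ‖F x‖ ≤ A) :
    ‖∫ x in a..b, g x • F' x‖ ≤ 2 * A * g a := by
  have h_integral_g' := intervalIntegral.integral_eq_sub_of_hasDerivAt hg hg'
  have h_antitone : g b ≤ g a := by
    have := intervalIntegral.integral_nonneg (μ := volume) hab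
      fun x hx => neg_nonneg.2 (hg'_nonpos x hx)
    rw [intervalIntegral.integral_neg, h_integral_g'] at this
    linarith
  have h_endpoint (x : ℝ) (hx : x ∈ Set.Icc a b) (hgx : 0 ≤ g x) : ‖g x • F x‖ ≤ g x * A := by
    rw [norm_smul, Real.norm_of_nonneg hgx]
    gcongr
    exact hA x hx
  have h_integral : ‖∫ x in a..b, g' x • F x‖ ≤ (g a - g b) * A := by
    calc ‖∫ x in a..b, g' x • F x‖ ≤ ∫ x in a..b, -g' x * A := by
          refine intervalIntegral.norm_integral_le_of_norm_le hab (.of_forall fun x hx => ?_)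
            (hg'.neg.mul_const A)
          have hx' := Set.Ioc_subset_Icc_self hx
          rw [norm_smul, Real.norm_of_nonpos (hg'_nonpos x hx')]
          exact mul_le_mul_of_nonneg_left (hA x hx') (neg_nonneg.2 (hg'_nonpos x hx'))
      _ = (g a - g b) * A := by
          rw [intervalIntegral.integral_mul_const, intervalIntegral.integral_neg, h_integral_g',
            neg_sub]
  rw [intervalIntegral.integral_smul_deriv_eq_deriv_smul hg hF hg' hF']
  calc ‖g b • F b - g a • F a - ∫ x in a..b, g' x • F x‖
      ≤ ‖g b • F b‖ + ‖g a • F a‖ + ‖∫ x in a..b, g' x • F x‖ :=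
        (norm_sub_le _ _).trans (by gcongr; exact norm_sub_le _ _)
    _ ≤ g b * A + g a * A + (g a - g b) * A := by
        gcongr
        · exact h_endpoint b ⟨hab, le_rfl⟩ hgb
        · exact h_endpoint a ⟨le_rfl, hab⟩ (hgb.trans h_antitone)
    _ = 2 * A * g a := by ring

lemma integral_sq_add_rpow_smul_eq (hf : Continuous f) (hξ : 0 < ξ) (s : ℝ) {T : ℝ} (hT : 0 ≤ T) :
    ∫ y in 0..T, (y ^ 2 + ξ) ^ (-s) • f y = (T ^ 2 + ξ) ^ (-s) • (∫ v in 0..T, f v) +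
      s • ∫ u in 0..T ^ 2, (u + ξ) ^ (-(s + 1)) • ∫ v in 0..√u, f v := by
  have h_cont : Continuous fun y : ℝ => 2 * y * (-s) * (y ^ 2 + ξ) ^ (-(s + 1)) :=
    (by fun_prop : Continuous fun y : ℝ => 2 * y * (-s)).mul
      ((by fun_prop : Continuous fun y : ℝ => y ^ 2 + ξ).rpow_const
        fun y => Or.inl (by positivity))
  have h_parts := intervalIntegral.integral_smul_deriv_eq_deriv_smul (a := 0) (b := T)
    (fun y _ => hasDerivAt_sq_add_rpow_neg s hξ y)
    (fun y _ => (hf.integral_hasStrictDerivAt 0 y).hasDerivAt)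
    (h_cont.intervalIntegrable _ _) (hf.intervalIntegrable _ _)
  have h_cont_subst : ContinuousOn (fun u : ℝ => (u + ξ) ^ (-(s + 1)) • ∫ v in 0..√u, f v)
      ((fun y => y ^ 2) '' Set.uIcc 0 T) := by
    refine ContinuousOn.smul (.rpow_const (by fun_prop) ?_)
      (continuous_integral_sqrt hf).continuousOn
    rintro _ ⟨y, _, rfl⟩
    exact Or.inl (by positivity)
  have h_subst := intervalIntegral.integral_deriv_smul_comp' (f' := fun y => 2 * y)
    (fun y _ => by simpa using hasDerivAt_pow 2 y) (by fun_prop) h_cont_subst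
  rw [zero_pow two_ne_zero] at h_subst
  rw [h_parts, intervalIntegral.integral_same, smul_zero, sub_zero, ← h_subst, sub_eq_add_neg,
    ← intervalIntegral.integral_neg, ← intervalIntegral.integral_smul s, add_right_inj]
  refine intervalIntegral.integral_congr fun y hy => ?_
  rw [Set.uIcc_of_le hT] at hy
  simp only [Function.comp_apply, Real.sqrt_sq hy.1, ← neg_smul, smul_smul]
  ring_nf

lemma tendsto_integral_sq_add_rpow_smul (hf : Continuous f)
    (hA : ∀ y ≥ 0, ‖∫ v in 0..y, f v‖ ≤ A) (hs : 0 < s) (hξ : 0 < ξ) :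
    Tendsto (fun T : ℝ => ∫ y in 0..T, (y ^ 2 + ξ) ^ (-s) • f y) atTop
      (𝓝 (s • stieltjesTransform (s + 1) (fun u => ∫ v in 0..√u, f v) ξ)) := by
  have h_sq : Tendsto (fun T : ℝ => T ^ 2) atTop atTop := tendsto_pow_atTop two_ne_zero
  have h_boundary : Tendsto (fun T : ℝ => (T ^ 2 + ξ) ^ (-s) • ∫ v in 0..T, f v) atTop (𝓝 0) := by
    have h_rpow : Tendsto (fun T : ℝ => (T ^ 2 + ξ) ^ (-s)) atTop (𝓝 0) :=
      (tendsto_rpow_neg_atTop hs).comp (tendsto_atTop_add_const_right _ ξ h_sq)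
    exact h_rpow.zero_smul_isBoundedUnder_le
      (isBoundedUnder_of_eventually_le ((eventually_ge_atTop 0).mono hA))
  have h_integral : Tendsto
      (fun T : ℝ => ∫ u in 0..T ^ 2, (u + ξ) ^ (-(s + 1)) • ∫ v in 0..√u, f v) atTop
      (𝓝 (stieltjesTransform (s + 1) (fun u => ∫ v in 0..√u, f v) ξ)) :=
    intervalIntegral_tendsto_integral_Ioi 0
      (integrableOn_add_rpow_smul (continuous_integral_sqrt hf).aestronglyMeasurable
        (fun u _ => hA _ (Real.sqrt_nonneg u)) (by linarith) hξ) h_sq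
  rw [← zero_add (s • _)]
  refine (h_boundary.add (h_integral.const_smul s)).congr' ?_
  filter_upwards [eventually_ge_atTop 0] with T hT
  exact (integral_sq_add_rpow_smul_eq hf hξ s hT).symm

end IntegrationByParts

section HyperbolicSubstitution

lemma integral_inv_sqrt_sq_add_smul {r : ℝ} (hr : 0 < r) {g : ℝ → E} (hg : Continuous g)
    (a b : ℝ) :
    ∫ y in r * Real.sinh a..r * Real.sinh b, (√(y ^ 2 + r ^ 2))⁻¹ • g y =
      ∫ t in a..b, g (r * Real.sinh t) := by
  have h_cont : Continuous fun y : ℝ => (√(y ^ 2 + r ^ 2))⁻¹ • g y :=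
    ((by fun_prop : Continuous fun y : ℝ => √(y ^ 2 + r ^ 2)).inv₀ fun y => by positivity).smul hg
  rw [← intervalIntegral.integral_deriv_smul_comp (f := fun t => r * Real.sinh t)
    (fun t _ => (Real.hasDerivAt_sinh t).const_mul r) (by fun_prop) h_cont]
  refine intervalIntegral.integral_congr fun t _ => ?_
  have h_pos : 0 < r * Real.cosh t := mul_pos hr (Real.cosh_pos t)
  have h_sq : (r * Real.sinh t) ^ 2 + r ^ 2 = (r * Real.cosh t) ^ 2 := by
    rw [mul_pow, mul_pow, Real.cosh_sq]; ring
  simp only [Function.comp_apply, h_sq, Real.sqrt_sq h_pos.le]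
  rw [smul_inv_smul₀ h_pos.ne']

lemma cosh_eq_one_add_two_mul_sinh_half_sq (t : ℝ) :
    Real.cosh t = 1 + 2 * Real.sinh (t / 2) ^ 2 := by
  have := Real.cosh_two_mul (t / 2)
  rw [mul_div_cancel₀ t two_ne_zero, Real.cosh_sq] at this
  linarith

end HyperbolicSubstitution

section Fresnel

lemma continuous_e : Continuous e := by unfold e; fun_prop

lemma continuous_e_sq : Continuous fun y : ℝ => e (y ^ 2) := continuous_e.comp (continuous_pow 2)

lemma e_eq_exp_ofReal_mul_I (q : ℝ) : e q = Complex.exp ((2 * Real.pi * q : ℝ) * Complex.I) := by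
  rw [e]; push_cast; ring_nf

lemma norm_e (q : ℝ) : ‖e q‖ = 1 := by
  rw [e_eq_exp_ofReal_mul_I, Complex.norm_exp_ofReal_mul_I]

lemma re_e (q : ℝ) : (e q).re = Real.cos (2 * Real.pi * q) := by
  rw [e_eq_exp_ofReal_mul_I, Complex.exp_ofReal_mul_I_re]

lemma e_add (p q : ℝ) : e (p + q) = e p * e q := by
  simp only [e, Complex.ofReal_add, mul_add, Complex.exp_add]

lemma hasDerivAt_e_sq (u : ℝ) :
    HasDerivAt (fun u : ℝ => e (u ^ 2)) (4 * Real.pi * Complex.I * (u * e (u ^ 2))) u := by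
  have h_sq : HasDerivAt (fun u : ℝ => ((u ^ 2 : ℝ) : ℂ)) ((2 * u : ℝ) : ℂ) u := by
    simpa using (hasDerivAt_pow 2 u).ofReal_comp
  refine (h_sq.const_mul (2 * Real.pi * Complex.I)).cexp.congr_deriv ?_
  rw [e]; push_cast; ring

lemma norm_integral_e_sq_le {a b : ℝ} (ha : 0 < a) (hab : a ≤ b) :
    ‖∫ u in a..b, e (u ^ 2)‖ ≤ (2 * Real.pi * a)⁻¹ := by
  have h_pos (u : ℝ) (hu : u ∈ Set.uIcc a b) : 0 < u :=
    ha.trans_le (Set.uIcc_of_le hab ▸ hu).1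
  have h_pi : (4 * Real.pi * Complex.I : ℂ) ≠ 0 := by simp [Real.pi_ne_zero]
  have h_inv (u : ℝ) (hu : u ∈ Set.uIcc a b) : HasDerivAt (fun u : ℝ => u⁻¹) (-(u ^ 2)⁻¹) u :=
    hasDerivAt_inv (h_pos u hu).ne'
  have h_primitive (u : ℝ) : HasDerivAt
      (fun u : ℝ => (4 * Real.pi * Complex.I)⁻¹ * e (u ^ 2)) (u * e (u ^ 2)) u :=
    ((hasDerivAt_e_sq u).const_mul _).congr_deriv (inv_mul_cancel_left₀ h_pi _)
  have h_norm (u : ℝ) : ‖(4 * Real.pi * Complex.I)⁻¹ * e (u ^ 2)‖ ≤ (4 * Real.pi)⁻¹ := by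
    simp [norm_e, abs_of_pos Real.pi_pos]
  have h_int_inv : IntervalIntegrable (fun u : ℝ => -(u ^ 2)⁻¹) volume a b :=
    (ContinuousOn.inv₀ (by fun_prop)
      fun u hu => (pow_pos (h_pos u hu) 2).ne').neg.intervalIntegrable
  have h_int : IntervalIntegrable (fun u : ℝ => u * e (u ^ 2)) volume a b :=
    (Complex.continuous_ofReal.mul continuous_e_sq).intervalIntegrable _ _
  calc ‖∫ u in a..b, e (u ^ 2)‖ = ‖∫ u in a..b, u⁻¹ • ((u : ℂ) * e (u ^ 2))‖ := by
        congr 1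
        refine intervalIntegral.integral_congr fun u hu => ?_
        have hu0 : (u : ℂ) ≠ 0 := by exact_mod_cast (h_pos u hu).ne'
        simp [hu0]
    _ ≤ 2 * (4 * Real.pi)⁻¹ * a⁻¹ :=
        norm_integral_smul_deriv_le hab h_inv (fun u _ => h_primitive u) h_int_inv h_int
          (fun u _ => neg_nonpos.2 (by positivity)) (inv_nonneg.2 (ha.le.trans hab))
          fun u _ => h_norm u
    _ = (2 * Real.pi * a)⁻¹ := by ring

lemma norm_integral_zero_e_sq_le {y : ℝ} (hy : 0 ≤ y) : ‖∫ u in 0..y, e (u ^ 2)‖ ≤ 2 := by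
  have h_trivial (b : ℝ) (hb : 0 ≤ b) : ‖∫ u in 0..b, e (u ^ 2)‖ ≤ b := by
    simpa [abs_of_nonneg hb] using intervalIntegral.norm_integral_le_of_norm_le_const
      (a := 0) (b := b) fun u _ => (norm_e (u ^ 2)).le
  rcases le_total y 1 with hy1 | hy1
  · linarith [h_trivial y hy]
  have h_tail : ‖∫ u in 1..y, e (u ^ 2)‖ ≤ 1 :=
    (norm_integral_e_sq_le one_pos hy1).trans (inv_le_one_of_one_le₀
      (by linarith [Real.pi_gt_three]))
  calc ‖∫ u in 0..y, e (u ^ 2)‖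
      = ‖(∫ u in 0..1, e (u ^ 2)) + ∫ u in 1..y, e (u ^ 2)‖ := by
        rw [intervalIntegral.integral_add_adjacent_intervals] <;>
          exact continuous_e_sq.intervalIntegrable _ _
    _ ≤ 1 + 1 := norm_add_le_of_le (h_trivial 1 zero_le_one) h_tail
    _ = 2 := by norm_num

/-- The Fresnel integral `∫_0^{√u} e(v²) dv`, as a function of `u` because it enters `v_Y` after
the substitution `u = y²`. -/
def fresnelSqrt (u : ℝ) : ℂ := ∫ v in 0..√u, e (v ^ 2)

lemma continuous_fresnelSqrt : Continuous fresnelSqrt := continuous_integral_sqrt continuous_e_sq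

lemma norm_fresnelSqrt_le (u : ℝ) : ‖fresnelSqrt u‖ ≤ 2 :=
  norm_integral_zero_e_sq_le (Real.sqrt_nonneg u)

end Fresnel

section BesselY

variable {ξ : ℝ}

lemma e_sq_div_sqrt_eq_smul (y ξ : ℝ) :
    e (y ^ 2) / (√(y ^ 2 + ξ) : ℂ) = (√(y ^ 2 + ξ))⁻¹ • e (y ^ 2) := by
  rw [Complex.real_smul, Complex.ofReal_inv, div_eq_inv_mul]

lemma tendsto_integral_e_sq_div_sqrt (hξ : 0 < ξ) :
    Tendsto (fun T : ℝ => ∫ y in 0..T, e (y ^ 2) / (√(y ^ 2 + ξ) : ℂ)) atTop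
      (𝓝 ((1 / 2 : ℝ) • stieltjesTransform (3 / 2) fresnelSqrt ξ)) := by
  have h_lim := tendsto_integral_sq_add_rpow_smul (s := 1 / 2) continuous_e_sq
    (fun y hy => norm_integral_zero_e_sq_le hy) one_half_pos hξ
  rw [show (1 / 2 + 1 : ℝ) = 3 / 2 by norm_num] at h_lim
  refine h_lim.congr fun T => intervalIntegral.integral_congr fun y _ => ?_
  simp only [e_sq_div_sqrt_eq_smul]
  rw [Real.rpow_neg (by positivity), Real.sqrt_eq_rpow]

lemma vY_eq_stieltjesTransform (hξ : 0 < ξ) :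
    vY ξ = (-Real.pi⁻¹ : ℝ) • stieltjesTransform (3 / 2) fresnelSqrt ξ := by
  rw [vY, (tendsto_integral_e_sq_div_sqrt hξ).limUnder_eq, Complex.real_smul, Complex.real_smul]
  push_cast
  ring

lemma tendsto_integral_e_sq_div_sqrt_vY (hξ : 0 < ξ) :
    Tendsto (fun T : ℝ => ∫ y in 0..T, e (y ^ 2) / (√(y ^ 2 + ξ) : ℂ)) atTop
      (𝓝 ((-(Real.pi / 2) : ℝ) • vY ξ)) := by
  rw [vY_eq_stieltjesTransform hξ, smul_smul,
    show -(Real.pi / 2) * -Real.pi⁻¹ = 1 / 2 by field_simp [Real.pi_ne_zero]]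
  exact tendsto_integral_e_sq_div_sqrt hξ

lemma cos_mul_cosh_eq_re (hξ : 0 ≤ ξ) (t : ℝ) :
    Real.cos (ξ * Real.cosh t) =
      (e (ξ / (2 * Real.pi)) * e ((√(ξ / Real.pi) * Real.sinh (t / 2)) ^ 2)).re := by
  rw [← e_add, re_e, mul_pow, Real.sq_sqrt (by positivity), cosh_eq_one_add_two_mul_sinh_half_sq]
  congr 1
  field_simp

lemma integral_cos_mul_cosh (hξ : 0 < ξ) (T : ℝ) :
    ∫ t in 0..T, Real.cos (ξ * Real.cosh t) = 2 * (e (ξ / (2 * Real.pi)) *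
      ∫ y in 0..√(ξ / Real.pi) * Real.sinh (T / 2),
        e (y ^ 2) / (√(y ^ 2 + ξ / Real.pi) : ℂ)).re := by
  set r : ℝ := √(ξ / Real.pi) with hr
  have hr_pos : 0 < r := Real.sqrt_pos.2 (by positivity)
  have hr_sq : r ^ 2 = ξ / Real.pi := Real.sq_sqrt (by positivity)
  set c : ℂ := e (ξ / (2 * Real.pi))
  have h_cont : Continuous fun t : ℝ => c * e ((r * Real.sinh (t / 2)) ^ 2) :=
    continuous_const.mul (continuous_e.comp (by fun_prop))
  have h_subst : ∫ t in 0..T / 2, e ((r * Real.sinh t) ^ 2) =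
      ∫ y in 0..r * Real.sinh (T / 2), e (y ^ 2) / (√(y ^ 2 + ξ / Real.pi) : ℂ) := by
    simp only [e_sq_div_sqrt_eq_smul, ← hr_sq]
    simpa using (integral_inv_sqrt_sq_add_smul hr_pos continuous_e_sq 0 (T / 2)).symm
  calc ∫ t in 0..T, Real.cos (ξ * Real.cosh t)
      = ∫ t in 0..T, (c * e ((r * Real.sinh (t / 2)) ^ 2)).re := by
        simp only [cos_mul_cosh_eq_re hξ.le, ← hr]; rfl
    _ = (∫ t in 0..T, c * e ((r * Real.sinh (t / 2)) ^ 2)).re :=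
        Complex.reCLM.intervalIntegral_comp_comm (h_cont.intervalIntegrable 0 T)
    _ = (c * (2 : ℝ) • ∫ t in 0..T / 2, e ((r * Real.sinh t) ^ 2)).re := by
        rw [intervalIntegral.integral_const_mul, intervalIntegral.integral_comp_div
          (fun t => e ((r * Real.sinh t) ^ 2)) two_ne_zero, zero_div]
    _ = _ := by rw [h_subst, mul_smul_comm, Complex.smul_re, smul_eq_mul]

lemma Y₀_eq_two_mul_re (hξ : 0 < ξ) :
    Y₀ ξ = 2 * (e (ξ / (2 * Real.pi)) * vY (ξ / Real.pi)).re := by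
  have h_pos : 0 < ξ / Real.pi := by positivity
  have h_sinh : Tendsto (fun T : ℝ => √(ξ / Real.pi) * Real.sinh (T / 2)) atTop atTop :=
    (Real.sinhOrderIso.tendsto_atTop.comp (tendsto_id.atTop_div_const two_pos)).const_mul_atTop
      (Real.sqrt_pos.2 h_pos)
  have h_lim : Tendsto (fun T : ℝ => ∫ t in 0..T, Real.cos (ξ * Real.cosh t)) atTop
      (𝓝 (2 * (e (ξ / (2 * Real.pi)) * (-(Real.pi / 2) : ℝ) • vY (ξ / Real.pi)).re)) := by
    simp only [integral_cos_mul_cosh hξ]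
    exact ((Complex.continuous_re.tendsto _).comp
      (((tendsto_integral_e_sq_div_sqrt_vY h_pos).comp h_sinh).const_mul _)).const_mul 2
  rw [Y₀, h_lim.limUnder_eq, mul_smul_comm, Complex.smul_re, smul_eq_mul]
  field_simp

end BesselY

theorem vY_properties_general :
    ContDiffOn ℝ (⊤ : ℕ∞) vY (Set.Ioi 0) ∧
    (∀ ξ : ℝ, 0 < ξ → Y₀ ξ = 2 * (e (ξ / (2 * Real.pi)) * vY (ξ / Real.pi)).re) ∧
    (∀ μ : ℕ, ∃ C : ℝ, ∀ ξ : ℝ, 0 < ξ →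
      ‖iteratedDerivWithin μ vY (Set.Ioi 0) ξ‖ ≤ C * ξ ^ (-(μ : ℝ) - 1 / 2)) := by
  have h_meas := continuous_fresnelSqrt.aestronglyMeasurable (μ := volume.restrict (Set.Ioi 0))
  have h_bound : ∀ u > 0, ‖fresnelSqrt u‖ ≤ 2 := fun u _ => norm_fresnelSqrt_le u
  have hs : (1 : ℝ) < 3 / 2 := by norm_num
  have h_vY : Set.EqOn vY ((-Real.pi⁻¹) • stieltjesTransform (3 / 2) fresnelSqrt) (Set.Ioi 0) :=
    fun ξ hξ => vY_eq_stieltjesTransform hξ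
  refine ⟨ContDiffOn.congr (contDiffOn_const.smul (contDiffOn_stieltjesTransform h_meas h_bound hs))
    h_vY, fun ξ hξ => Y₀_eq_two_mul_re hξ, fun μ =>
    ⟨Real.pi⁻¹ * ((ascPochhammer ℝ μ).eval (3 / 2) * (2 / (μ + 1 / 2))), fun ξ hξ => ?_⟩⟩
  have h_decay := norm_iteratedDerivWithin_stieltjesTransform_le h_meas h_bound hs μ hξ
  rw [iteratedDerivWithin_congr h_vY hξ, iteratedDerivWithin_const_smul_field, norm_smul, norm_neg,
    Real.norm_of_nonneg (by positivity)]
  calc _ ≤ Real.pi⁻¹ * ((ascPochhammer ℝ μ).eval (3 / 2) *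
          (ξ ^ (1 - (3 / 2 + (μ : ℝ))) / (3 / 2 + μ - 1) * 2)) := by gcongr
    _ = _ := by ring_nf

/-- `v_Y` is smooth on `(0,∞)`, represents `Y₀` as an oscillating function via
`Y₀(ξ) = 2 Re(e(ξ/2π) v_Y(ξ/π))`, and all its derivatives satisfy
`v_Y^{(μ)}(ξ) ≪ ξ^{-μ-1/2}` for `ξ ≥ 1`. -/
theorem vY_properties :
    ContDiffOn ℝ (⊤ : ℕ∞) vY (Set.Ioi 0) ∧
    (∀ ξ : ℝ, 0 < ξ → Y₀ ξ = 2 * (e (ξ / (2 * Real.pi)) * vY (ξ / Real.pi)).re) ∧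
    (∀ μ : ℕ, ∃ C : ℝ, ∀ ξ : ℝ, 1 ≤ ξ →
      ‖iteratedDerivWithin μ vY (Set.Ioi 0) ξ‖ ≤ C * ξ ^ (-(μ : ℝ) - 1 / 2)) := by
  obtain ⟨h_smooth, h_bessel, h_decay⟩ := vY_properties_general
  exact ⟨h_smooth, h_bessel, fun μ => (h_decay μ).imp fun _ hC ξ hξ => hC ξ (by linarith)⟩
end
end
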